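/- arXiv:1706.00208 — 2 statements merged into one kernel-verified Lean document; each statement's English description precedes it below -/
import Mathlib

section
/- Let p be a prime, k a perfect field of characteristic p, n ≥ 1, and E = 𝕎(k)⟦u_1, …, u_{n−1}⟧, with the convention u_0 = p. For 0 ≤ t < n, set I_t = (u_0, u_1, …, u_{t−1}) ⊂ E and let L_t be the I_t-adic completion of the localization E[u_t^{−1}]. Then L_t is a Noetherian ring and a normal domain, i.e., an integral domain integrally closed in its field of fractions. (This ring is the coefficient ring π₀L_{K(t)}E_n of the localization of Morava E-theory at Morava K-theory.) -/
/-- The generators of Morava `E`-theory: `u 0 = p` and `u j = X (j - 1)` for `1 ≤ j ≤ n - 1`,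
as elements of `E = 𝕎(k)⟦u_1, …, u_{n-1}⟧`. -/
noncomputable def MoravaGen (p : ℕ) [Fact p.Prime] (k : Type*) [CommRing k] (n : ℕ) (j : ℕ) :
    MvPowerSeries (Fin (n - 1)) (WittVector p k) :=
  if j = 0 then (p : MvPowerSeries (Fin (n - 1)) (WittVector p k))
  else if h : j - 1 < n - 1 then MvPowerSeries.X ⟨j - 1, h⟩ else 0

/-!
The sequence `u_0, …, u_{n-1}` is regular in the local ring `E` and generates its maximal ideal.
Normality lifts from `R ⧸ (x)` to a Noetherian ring `R` when `x` is a regular element of the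
Jacobson radical, so ascending from the residue field `E ⧸ (u_0, …, u_{n-1})` shows that
`E ⧸ I_t` is normal, and hence so is its localization `E[u_t⁻¹] ⧸ I_t`. The completion of
`E[u_t⁻¹]` is flat over it, has the same quotient by `I_t`, and has `I_t` in its Jacobson radical,
so normality lifts again.
-/

open nonZeroDivisors

/-- A normal domain: an integral domain that is integrally closed in its field of fractions. -/
class IsNormalDomain (R : Type*) [CommRing R] : Prop where
  isDomain : IsDomain R
  isIntegrallyClosed : IsIntegrallyClosed R

namespace IsNormalDomain

attribute [instance] isDomain isIntegrallyClosed

theorem of_ringEquiv {R S : Type*} [CommRing R] [CommRing S] [IsNormalDomain R] (e : R ≃+* S) :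
    IsNormalDomain S where
  isDomain := e.symm.toMulEquiv.isDomain R
  isIntegrallyClosed := IsIntegrallyClosed.of_equiv e

theorem of_isField {R : Type*} [CommRing R] (hR : IsField R) : IsNormalDomain R :=
  let _ := hR.toField
  { isDomain := hR.isDomain, isIntegrallyClosed := inferInstance }

theorem of_isLocalization {R : Type*} (S : Type*) [CommRing R] [CommRing S] [Algebra R S]
    [IsNormalDomain R] (M : Submonoid R) [IsLocalization M S] (hM : M ≤ R⁰) :
    IsNormalDomain S where
  isDomain := IsLocalization.isDomain_of_le_nonZeroDivisors (M := M) S hM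
  isIntegrallyClosed := isIntegrallyClosed_of_isLocalization S M hM

theorem quotient_map_localizationAway {R A : Type*} [CommRing R] [CommRing A] [Algebra R A]
    (r : R) [IsLocalization.Away r A] {I : Ideal R} [IsNormalDomain (R ⧸ I)] (hr : r ∉ I) :
    IsNormalDomain (A ⧸ I.map (algebraMap R A)) := by
  refine .of_isLocalization _ (Algebra.algebraMapSubmonoid (R ⧸ I) (.powers r)) ?_
  rw [Algebra.algebraMapSubmonoid_powers]
  refine powers_le_nonZeroDivisors_of_noZeroDivisors ?_
  rwa [ne_eq, Ideal.Quotient.algebraMap_eq, Ideal.Quotient.eq_zero_iff_mem]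

end IsNormalDomain

section IntegralFractions

theorem ne_zero_of_not_dvd {M : Type*} [SemigroupWithZero M] {a b : M} (h : ¬ a ∣ b) : b ≠ 0 := by
  rintro rfl
  exact h (dvd_zero a)

theorem dvd_of_dvd_prime_pow_mul {R : Type*} [CommRing R] [IsDomain R] {x d y : R}
    (hx : Prime x) (hd : ¬ x ∣ d) {q : ℕ} (h : d ∣ x ^ q * y) : d ∣ y := by
  obtain ⟨e, he⟩ := h
  obtain ⟨e', rfl⟩ := hx.pow_dvd_of_dvd_mul_left q hd (Dvd.intro y he)
  refine ⟨e', mul_left_cancel₀ (pow_ne_zero q hx.ne_zero) ?_⟩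
  rw [he]; ring

variable {R : Type*} [CommRing R] (K : Type*) [Field K] [Algebra R K]
  [IsFractionRing R K] {x b d : R}

theorem dvd_of_isIntegral_div [IsIntegrallyClosed R] (hd : d ≠ 0)
    (h : IsIntegral R (algebraMap R K b / algebraMap R K d)) : d ∣ b := by
  obtain ⟨y, hy⟩ := IsIntegrallyClosed.isIntegral_iff.mp h
  rw [eq_div_iff (by simpa using hd), ← map_mul] at hy
  exact Dvd.intro_left y (FaithfulSMul.algebraMap_injective R K hy)

variable [IsDomain R] [IsNoetherianRing R]

theorem isIntegral_div_iff (hd : d ≠ 0) :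
    IsIntegral R (algebraMap R K b / algebraMap R K d) ↔ ∃ c ≠ 0, ∀ n, d ^ n ∣ c * b ^ n := by
  have smul_pow_mem_range_iff (c : R) (n : ℕ) :
      c • (algebraMap R K b / algebraMap R K d) ^ n ∈ (algebraMap R K).range ↔
        d ^ n ∣ c * b ^ n := by
    have hdn : algebraMap R K d ^ n ≠ 0 := pow_ne_zero n (by simpa using hd)
    rw [RingHom.mem_range, dvd_iff_exists_eq_mul_left]
    refine exists_congr fun y => ?_
    rw [Algebra.smul_def, div_pow, ← mul_div_assoc, eq_div_iff hdn, ← map_pow, ← map_pow,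
      ← map_mul, ← map_mul, (FaithfulSMul.algebraMap_injective R K).eq_iff, eq_comm]
  simp only [← isAlmostIntegral_iff_isIntegral, IsAlmostIntegral, smul_pow_mem_range_iff,
    mem_nonZeroDivisors_iff_ne_zero]

variable {K}

theorem dvd_of_isIntegral_div_prime_mul (hx : Prime x) (hd : d ≠ 0)
    (h : IsIntegral R (algebraMap R K b / algebraMap R K (x * d))) : x ∣ b := by
  obtain ⟨c, hc, hdvd⟩ := (isIntegral_div_iff K (mul_ne_zero hx.ne_zero hd)).mp h
  obtain ⟨q, c', hxc', rfl⟩ := WfDvdMonoid.max_power_factor hc hx.irreducible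
  have : x ^ (q + 1) ∣ x ^ q * (c' * b ^ (q + 1)) := by
    rw [← mul_assoc]
    exact (pow_dvd_pow_of_dvd (dvd_mul_right x d) _).trans (hdvd (q + 1))
  rw [pow_succ, mul_dvd_mul_iff_left (pow_ne_zero q hx.ne_zero)] at this
  exact hx.dvd_of_dvd_pow ((hx.dvd_or_dvd this).resolve_left hxc')

theorem exists_eq_div_of_isIntegral_of_prime (hx : Prime x) {α : K} (hα : IsIntegral R α) :
    ∃ b d : R, ¬ x ∣ d ∧ α = algebraMap R K b / algebraMap R K d := by
  obtain ⟨b, a, ha, rfl⟩ := IsFractionRing.div_surjective (A := R) α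
  obtain ⟨r, d, hxd, rfl⟩ :=
    WfDvdMonoid.max_power_factor (nonZeroDivisors.ne_zero ha) hx.irreducible
  clear ha
  induction r generalizing b with
  | zero => exact ⟨b, d, hxd, by simp⟩
  | succ r ih =>
    have hxr : x ^ r * d ≠ 0 :=
      mul_ne_zero (pow_ne_zero r hx.ne_zero) (ne_zero_of_not_dvd hxd)
    rw [pow_succ', mul_assoc] at hα ⊢
    obtain ⟨b', rfl⟩ := dvd_of_isIntegral_div_prime_mul hx hxr hα
    rw [map_mul, map_mul _ x, mul_div_mul_left _ _ (by simpa using hx.ne_zero)] at hα ⊢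
    exact ih b' hα

theorem isIntegral_div_of_isIntegral_prime_mul_div (hx : Prime x) (hd : ¬ x ∣ d)
    (h : IsIntegral R (algebraMap R K (x * b) / algebraMap R K d)) :
    IsIntegral R (algebraMap R K b / algebraMap R K d) := by
  rw [isIntegral_div_iff K (ne_zero_of_not_dvd hd)] at h ⊢
  obtain ⟨c, hc, hdvd⟩ := h
  refine ⟨c, hc, fun n => dvd_of_dvd_prime_pow_mul hx (mt hx.dvd_of_dvd_pow hd) (q := n) ?_⟩
  simpa only [mul_pow, mul_left_comm] using hdvd n

theorem mk_dvd_mk_of_isIntegral_div [IsNormalDomain (R ⧸ Ideal.span {x})] (hx : Prime x)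
    (hd : ¬ x ∣ d) (h : IsIntegral R (algebraMap R K b / algebraMap R K d)) :
    Ideal.Quotient.mk (Ideal.span {x}) d ∣ Ideal.Quotient.mk (Ideal.span {x}) b := by
  obtain ⟨c, hc, hdvd⟩ := (isIntegral_div_iff K (ne_zero_of_not_dvd hd)).mp h
  obtain ⟨q, c', hxc', rfl⟩ := WfDvdMonoid.max_power_factor hc hx.irreducible
  have mk_ne_zero {y : R} (hy : ¬ x ∣ y) : Ideal.Quotient.mk (Ideal.span {x}) y ≠ 0 := by
    rwa [ne_eq, Ideal.Quotient.eq_zero_iff_dvd]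
  refine dvd_of_isIntegral_div (FractionRing (R ⧸ Ideal.span {x})) (mk_ne_zero hd)
    ((isIntegral_div_iff _ (mk_ne_zero hd)).mpr ⟨_, mk_ne_zero hxc', fun n => ?_⟩)
  have : d ^ n ∣ c' * b ^ n := dvd_of_dvd_prime_pow_mul hx (mt hx.dvd_of_dvd_pow hd)
    (by simpa only [mul_assoc] using hdvd n)
  simpa only [map_mul, map_pow] using map_dvd (Ideal.Quotient.mk (Ideal.span {x})) this

end IntegralFractions

section Lifting

variable {R : Type*} [CommRing R]

/-- The ideal of all `b` such that the fraction `b / d` is integral over `R`. Being an ideal, it is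
finitely generated when `R` is Noetherian, which makes Nakayama's lemma available even though the
integral closure of `R` need not be a finite `R`-module. -/
noncomputable def integralNumerators [IsDomain R] (d : R) : Ideal R :=
  (Subalgebra.toSubmodule (integralClosure R (FractionRing R))).comap
    (LinearMap.toSpanSingleton R (FractionRing R) (algebraMap R (FractionRing R) d)⁻¹)

theorem mem_integralNumerators [IsDomain R] {b d : R} :
    b ∈ integralNumerators d ↔
      IsIntegral R (algebraMap R (FractionRing R) b / algebraMap R (FractionRing R) d) := by
  simp only [integralNumerators, Submodule.mem_comap, LinearMap.toSpanSingleton_apply,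
    Subalgebra.mem_toSubmodule, mem_integralClosure_iff, Algebra.smul_def, div_eq_mul_inv]

theorem integralNumerators_le_sup [IsDomain R] [IsNoetherianRing R] {x d : R}
    [IsNormalDomain (R ⧸ Ideal.span {x})] (hx : Prime x) (hd : ¬ x ∣ d) :
    integralNumerators d ≤ Ideal.span {d} ⊔ Ideal.span {x} • integralNumerators d := by
  intro b hb
  obtain ⟨r, hr⟩ := mk_dvd_mk_of_isIntegral_div hx hd (mem_integralNumerators.mp hb)
  obtain ⟨r, rfl⟩ := Ideal.Quotient.mk_surjective r
  obtain ⟨c, hc⟩ : x ∣ b - d * r := by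
    rwa [← map_mul, Ideal.Quotient.eq, Ideal.mem_span_singleton] at hr
  have hdr : d * r ∈ Ideal.span {d} := Ideal.mem_span_singleton.mpr (dvd_mul_right d r)
  have hd_mem : d ∈ integralNumerators d := by
    rw [mem_integralNumerators,
      div_self ((map_ne_zero_iff _ (FaithfulSMul.algebraMap_injective R _)).mpr
        (ne_zero_of_not_dvd hd))]
    exact isIntegral_one
  have hxc : x * c ∈ integralNumerators d :=
    hc ▸ sub_mem hb (Ideal.mul_mem_right r _ hd_mem)
  have hc_mem : c ∈ integralNumerators d := mem_integralNumerators.mpr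
    (isIntegral_div_of_isIntegral_prime_mul_div hx hd (mem_integralNumerators.mp hxc))
  rw [← add_sub_cancel (d * r) b, hc]
  exact Submodule.add_mem_sup hdr
    (Submodule.smul_mem_smul (Ideal.mem_span_singleton_self x) hc_mem)

variable [IsNoetherianRing R]

theorem isIntegrallyClosed_of_quotient_span_prime [IsDomain R] {x : R}
    [IsNormalDomain (R ⧸ Ideal.span {x})] (hx : Prime x) (hxJ : x ∈ Ideal.jacobson (⊥ : Ideal R)) :
    IsIntegrallyClosed R := by
  refine (isIntegrallyClosed_iff (FractionRing R)).mpr fun {α} hα => ?_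
  obtain ⟨b, d, hd, rfl⟩ := exists_eq_div_of_isIntegral_of_prime hx hα
  have hle : integralNumerators d ≤ Ideal.span {d} :=
    Submodule.le_of_le_smul_of_le_jacobson_bot (IsNoetherian.noetherian _)
      ((Ideal.span_singleton_le_iff_mem _).mpr hxJ) (integralNumerators_le_sup hx hd)
  obtain ⟨c, rfl⟩ := Ideal.mem_span_singleton.mp (hle (mem_integralNumerators.mpr hα))
  have hdK : algebraMap R (FractionRing R) d ≠ 0 := by simpa using ne_zero_of_not_dvd hd
  exact ⟨c, by rw [map_mul, mul_div_cancel_left₀ _ hdK]⟩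

theorem isDomain_of_isPrime_span_singleton {x : R} [(Ideal.span {x}).IsPrime]
    (hreg : x ∈ R⁰) (hxJ : x ∈ Ideal.jacobson (⊥ : Ideal R)) : IsDomain R := by
  obtain ⟨Q, hQ, hQx⟩ := Ideal.exists_minimalPrimes_le (bot_le : ⊥ ≤ Ideal.span {x})
  have hQprime : Q.IsPrime := hQ.1.1
  have hxQ : x ∉ Q := fun h =>
    Set.disjoint_left.mp (Ideal.disjoint_nonZeroDivisors_of_mem_minimalPrimes hQ) h hreg
  have hle : Q ≤ Ideal.span {x} • Q := fun y hy => by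
    obtain ⟨z, rfl⟩ := Ideal.mem_span_singleton.mp (hQx hy)
    exact Submodule.smul_mem_smul (Ideal.mem_span_singleton_self x)
      ((hQprime.mem_or_mem hy).resolve_left hxQ)
  have hbot : Q = ⊥ := Submodule.eq_bot_of_le_smul_of_le_jacobson_bot _ Q
    (IsNoetherian.noetherian Q) hle ((Ideal.span_singleton_le_iff_mem _).mpr hxJ)
  rw [hbot] at hQprime
  exact IsDomain.of_bot_isPrime R

theorem IsNormalDomain.of_quotient_span_singleton {x : R} [IsNormalDomain (R ⧸ Ideal.span {x})]
    (hreg : x ∈ R⁰) (hxJ : x ∈ Ideal.jacobson (⊥ : Ideal R)) : IsNormalDomain R := by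
  have hP : (Ideal.span {x}).IsPrime := (Ideal.Quotient.isDomain_iff_prime _).mp inferInstance
  have hR : IsDomain R := isDomain_of_isPrime_span_singleton hreg hxJ
  have hx : Prime x := (Ideal.span_singleton_prime (nonZeroDivisors.ne_zero hreg)).mp hP
  exact ⟨hR, isIntegrallyClosed_of_quotient_span_prime hx hxJ⟩

end Lifting

section WeaklyRegular

open RingTheory.Sequence

variable {R : Type*} [CommRing R]

theorem map_quotientMk_le_jacobson_bot {I J : Ideal R} (hJ : J ≤ Ideal.jacobson ⊥) :
    J.map (Ideal.Quotient.mk I) ≤ Ideal.jacobson ⊥ := by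
  refine Ideal.map_le_iff_le_comap.mpr fun y hy => ?_
  rw [Ideal.mem_comap, Ideal.mem_jacobson_bot]
  intro z
  obtain ⟨z, rfl⟩ := Ideal.Quotient.mk_surjective z
  simpa using (Ideal.mem_jacobson_bot.mp (hJ hy) z).map (Ideal.Quotient.mk I)

theorem quotientMk_mem_nonZeroDivisors_of_isWeaklyRegular {rs₁ rs₂ : List R} {r : R}
    (h : IsWeaklyRegular R (rs₁ ++ r :: rs₂)) :
    Ideal.Quotient.mk (Ideal.ofList rs₁) r ∈ (R ⧸ Ideal.ofList rs₁)⁰ := by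
  have := (isWeaklyRegular_cons_iff _ _ _).mp ((isWeaklyRegular_append_iff R rs₁ _).mp h).2 |>.1
  rw [isSMulRegular_quotient_iff_mem_of_smul_mem, smul_eq_mul, Ideal.mul_top] at this
  rw [mem_nonZeroDivisors_iff_right]
  intro f hf
  obtain ⟨f, rfl⟩ := Ideal.Quotient.mk_surjective f
  rw [← map_mul, Ideal.Quotient.eq_zero_iff_mem, mul_comm] at hf
  exact Ideal.Quotient.eq_zero_iff_mem.mpr (this f hf)

theorem IsNormalDomain.of_quotient_ofList_append [IsNoetherianRing R] (rs₁ rs₂ : List R)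
    (hreg : IsWeaklyRegular R (rs₁ ++ rs₂)) (hrad : Ideal.ofList rs₂ ≤ Ideal.jacobson ⊥)
    [h : IsNormalDomain (R ⧸ Ideal.ofList (rs₁ ++ rs₂))] :
    IsNormalDomain (R ⧸ Ideal.ofList rs₁) := by
  induction rs₂ generalizing rs₁ with
  | nil => rwa [List.append_nil] at h
  | cons r rs₂ ih =>
    rw [Ideal.ofList_cons, sup_le_iff] at hrad
    have : IsNormalDomain (R ⧸ Ideal.ofList rs₁ ⊔ Ideal.span {r}) := by
      rw [← Ideal.ofList_singleton, ← Ideal.ofList_append]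
      rw [List.append_cons] at h hreg
      exact ih (rs₁ ++ [r]) hreg hrad.2
    have : IsNormalDomain ((R ⧸ Ideal.ofList rs₁) ⧸
        Ideal.span {Ideal.Quotient.mk (Ideal.ofList rs₁) r}) := by
      rw [← Set.image_singleton, ← Ideal.map_span]
      exact .of_ringEquiv (DoubleQuot.quotQuotEquivQuotSup _ _).symm
    exact .of_quotient_span_singleton (quotientMk_mem_nonZeroDivisors_of_isWeaklyRegular hreg)
      (map_quotientMk_le_jacobson_bot hrad.1
        (Ideal.mem_map_of_mem _ (Ideal.mem_span_singleton_self r)))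

theorem IsNormalDomain.of_isWeaklyRegular [IsNoetherianRing R] (rs : List R)
    (hreg : IsWeaklyRegular R rs) (hrad : Ideal.ofList rs ≤ Ideal.jacobson ⊥)
    [IsNormalDomain (R ⧸ Ideal.ofList rs)] : IsNormalDomain R := by
  have : IsNormalDomain (R ⧸ Ideal.ofList ([] ++ rs)) := ‹_›
  have : IsNormalDomain (R ⧸ (⊥ : Ideal R)) := by
    rw [← Ideal.ofList_nil]
    exact .of_quotient_ofList_append [] rs hreg hrad
  exact .of_ringEquiv (RingEquiv.quotientBot R)

end WeaklyRegular

section CompleteRings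

variable {A S : Type*} [CommRing A] [CommRing S] [Algebra A S] {I : Ideal S} [IsAdicComplete I S]

theorem exists_ringHom_mvPowerSeries_extending_aeval {σ : Type*} [Finite σ] {a : σ → S}
    (ha : ∀ i, a i ∈ I) :
    ∃ F : MvPowerSeries σ A →+* S, ∀ f : MvPolynomial σ A, F f = MvPolynomial.aeval a f := by
  let J := MvPolynomial.idealOfVars σ A
  let g : MvPolynomial σ A →+* S := (MvPolynomial.aeval a : MvPolynomial σ A →ₐ[A] S)
  have hJ : J ≤ I.comap g := Ideal.span_le.mpr <| Set.range_subset_iff.mpr fun i => by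
    simpa [g] using ha i
  have hJn (n : ℕ) : J ^ n ≤ (I ^ n).comap g := (Ideal.pow_right_mono hJ n).trans
    (Ideal.le_comap_pow g n)
  let φ (n : ℕ) : MvPowerSeries σ A →+* S ⧸ I ^ n :=
    (Ideal.quotientMap (I ^ n) g (hJn n)).comp (MvPowerSeries.truncTotalAlgHom σ A n)
  have hφ {m n : ℕ} (hmn : m ≤ n) : (Ideal.Quotient.factorPow I hmn).comp (φ n) = φ m := by
    ext f
    exact Ideal.Quotient.eq.mpr <| map_sub g _ _ ▸
      hJn m (MvPowerSeries.truncTotal_sub_truncTotal_mem_pow_idealOfVars hmn le_rfl f)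
  refine ⟨IsAdicComplete.liftRingHom I φ hφ, fun f => ?_⟩
  refine (IsHausdorff.eq_iff_smodEq (I := I)).mpr fun n => ?_
  rw [smul_eq_mul, Ideal.mul_top, SModEq.idealQuotientMk,
    IsAdicComplete.mk_liftRingHom]
  exact congrArg (Ideal.quotientMap (I ^ n) g (hJn n))
    ((MvPowerSeries.truncTotalAlgHom σ A n).commutes f)

theorem isNoetherianRing_of_isAdicComplete_of_surjective [IsNoetherianRing A] (hI : I.FG)
    (hsurj : Function.Surjective (algebraMap A (S ⧸ I))) : IsNoetherianRing S := by
  obtain ⟨s, hs⟩ := hI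
  obtain ⟨F, hF⟩ := exists_ringHom_mvPowerSeries_extending_aeval (A := A) (I := I)
    (a := ((↑) : s → S)) fun i => hs ▸ Ideal.subset_span i.2
  have hFX (i : s) : F (MvPowerSeries.X i) = i := by
    simpa only [MvPolynomial.coe_X, MvPolynomial.aeval_X] using hF (MvPolynomial.X i)
  have hFC (c : A) : F (MvPowerSeries.C c) = algebraMap A S c := by
    simpa only [MvPolynomial.coe_C, MvPolynomial.aeval_C] using hF (MvPolynomial.C c)
  have hmap : (Ideal.span (Set.range MvPowerSeries.X)).map F = I := by
    rw [Ideal.map_span, ← Set.range_comp, ← hs]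
    congr 1
    ext; simp [hFX]
  have : IsHausdorff ((Ideal.span (Set.range MvPowerSeries.X)).map F) S := by
    rw [hmap]; infer_instance
  refine isNoetherianRing_of_surjective _ _ F
    (surjective_of_mk_map_comp_surjective (I := Ideal.span (Set.range MvPowerSeries.X)) F ?_)
  rw [hmap]
  intro y
  obtain ⟨c, rfl⟩ := hsurj y
  exact ⟨MvPowerSeries.C c, congrArg (Ideal.Quotient.mk I) (hFC c)⟩

end CompleteRings

section Completion

open RingTheory.Sequence

variable {A : Type*} [CommRing A] [IsNoetherianRing A]

theorem isNoetherianRing_adicCompletion (I : Ideal A) :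
    IsNoetherianRing (AdicCompletion I A) := by
  have hI : I.FG := IsNoetherian.noetherian I
  have := AdicCompletion.isAdicComplete_self I hI
  refine isNoetherianRing_of_isAdicComplete_of_surjective (A := A)
    (I := I.map (algebraMap A (AdicCompletion I A))) (hI.map _) ?_
  rw [← AdicCompletion.ker_evalOneₐ_eq_map I hI]
  intro y
  obtain ⟨y, rfl⟩ := Ideal.Quotient.mk_surjective y
  obtain ⟨c, hc⟩ := Ideal.Quotient.mk_surjective (AdicCompletion.evalOneₐ I y)
  refine ⟨c, Ideal.Quotient.eq.mpr ?_⟩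
  change AdicCompletion.evalOneₐ I (algebraMap _ _ c - y) = 0
  rw [map_sub, ← hc, AlgHom.commutes]
  exact sub_self _

theorem IsNormalDomain.adicCompletion_ofList (rs : List A) (hreg : IsWeaklyRegular A rs)
    [IsNormalDomain (A ⧸ Ideal.ofList rs)] :
    IsNormalDomain (AdicCompletion (Ideal.ofList rs) A) := by
  set I := Ideal.ofList rs
  set f := algebraMap A (AdicCompletion I A)
  have hmap : Ideal.ofList (rs.map f) = I.map f := (Ideal.map_ofList f rs).symm
  have hIfg : I.FG := IsNoetherian.noetherian I
  have : IsNoetherianRing (AdicCompletion I A) := isNoetherianRing_adicCompletion I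
  have hcomplete : IsAdicComplete (I.map f) (AdicCompletion I A) :=
    AdicCompletion.isAdicComplete_self I hIfg
  have : IsNormalDomain (AdicCompletion I A ⧸ Ideal.ofList (rs.map f)) := by
    rw [hmap, ← AdicCompletion.ker_evalOneₐ_eq_map I hIfg]
    exact .of_ringEquiv (RingHom.quotientKerEquivOfSurjective
      (f := (AdicCompletion.evalOneₐ I).toRingHom) (AdicCompletion.evalOneₐ_surjective I)).symm
  exact .of_isWeaklyRegular (rs.map f) hreg.of_flat
    (hmap ▸ IsAdicComplete.le_jacobson_bot (I.map f))

theorem IsNormalDomain.adicCompletion_localizationAway (B : Type*) [CommRing B] [Algebra A B]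
    (rs₁ : List A) (r : A) (rs₂ : List A) [IsLocalization.Away r B]
    (hreg : IsWeaklyRegular A (rs₁ ++ r :: rs₂))
    (hrad : Ideal.ofList (rs₁ ++ r :: rs₂) ≤ Ideal.jacobson ⊥)
    [IsNormalDomain (A ⧸ Ideal.ofList (rs₁ ++ r :: rs₂))] :
    IsNormalDomain (AdicCompletion ((Ideal.ofList rs₁).map (algebraMap A B)) B) := by
  have : IsNoetherianRing B := IsLocalization.isNoetherianRing (.powers r) B ‹_›
  have : Module.Flat A B := IsLocalization.flat B (.powers r)
  have : IsNormalDomain (A ⧸ Ideal.ofList rs₁) :=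
    .of_quotient_ofList_append rs₁ (r :: rs₂) hreg
      ((Ideal.ofList_append rs₁ _ ▸ le_sup_right).trans hrad)
  have hr : r ∉ Ideal.ofList rs₁ := fun hr =>
    nonZeroDivisors.ne_zero (quotientMk_mem_nonZeroDivisors_of_isWeaklyRegular hreg)
      (Ideal.Quotient.eq_zero_iff_mem.mpr hr)
  have : IsNormalDomain (B ⧸ (Ideal.ofList rs₁).map (algebraMap A B)) :=
    .quotient_map_localizationAway r hr
  rw [Ideal.map_ofList] at this ⊢
  exact .adicCompletion_ofList _ ((isWeaklyRegular_append_iff A rs₁ _).mp hreg).1.of_flat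

end Completion

section PowerSeries

open MvPowerSeries RingTheory.Sequence

variable {σ R : Type*} [CommRing R] {a : R}

theorem C_dvd_iff_forall_dvd_coeff {f : MvPowerSeries σ R} : C a ∣ f ↔ ∀ m, a ∣ coeff m f := by
  refine ⟨?_, fun h => ?_⟩
  · rintro ⟨g, rfl⟩ m
    exact ⟨coeff m g, coeff_C_mul m g a⟩
  · choose g hg using h
    exact ⟨(g : MvPowerSeries σ R), MvPowerSeries.ext fun m =>
      (hg m).trans (coeff_C_mul m g a).symm⟩

theorem ofList_C_cons_concat (l : List σ) (i : σ) :
    Ideal.ofList (C a :: (l ++ [i]).map X) =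
      Ideal.ofList (C a :: l.map X) ⊔ Ideal.span {(X i : MvPowerSeries σ R)} := by
  rw [List.map_append, ← List.cons_append, Ideal.ofList_append, List.map_singleton,
    Ideal.ofList_singleton]

theorem mem_ofList_C_cons_X_iff {l : List σ} {f : MvPowerSeries σ R} :
    f ∈ Ideal.ofList (C a :: l.map X) ↔ ∀ m, (∀ i ∈ l, m i = 0) → a ∣ coeff m f := by
  classical
  induction l using List.reverseRecOn generalizing f with
  | nil =>
    simp [Ideal.mem_span_singleton, C_dvd_iff_forall_dvd_coeff]
  | append_singleton l i ih =>
    rw [ofList_C_cons_concat]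
    refine ⟨fun hf m hm => ?_, fun hf => ?_⟩
    · obtain ⟨g, hg, y, hy, rfl⟩ := Submodule.mem_sup.mp hf
      have hym : coeff m y = 0 :=
        X_dvd_iff.mp (Ideal.mem_span_singleton.mp hy) m (hm i (by simp))
      rw [map_add, hym, add_zero]
      exact ih.mp hg m fun j hj => hm j (List.mem_append_left _ hj)
    · let g : MvPowerSeries σ R := fun m => if m i = 0 then coeff m f else 0
      have coeff_g (m) : coeff m g = if m i = 0 then coeff m f else 0 := rfl
      refine Submodule.mem_sup.mpr ⟨g, ih.mpr fun m hm => ?_, f - g, ?_, add_sub_cancel g f⟩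
      · rw [coeff_g]
        split_ifs with hmi
        · exact hf m (by simpa [or_imp, forall_and] using ⟨hm, hmi⟩)
        · exact dvd_zero a
      · rw [Ideal.mem_span_singleton, X_dvd_iff]
        intro m hm
        rw [map_sub, coeff_g, if_pos hm, sub_self]

theorem isWeaklyRegular_C_cons_X (ha : IsSMulRegular R a) {l : List σ} (hl : l.Nodup) :
    IsWeaklyRegular (MvPowerSeries σ R) (C a :: l.map X) := by
  classical
  induction l using List.reverseRecOn with
  | nil =>
    rw [List.map_nil, isWeaklyRegular_singleton_iff]
    intro f g hfg
    ext m
    refine ha ?_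
    simpa only [smul_eq_mul, coeff_C_mul] using congrArg (coeff m) hfg
  | append_singleton l i ih =>
    obtain ⟨hl, -, hi⟩ := List.nodup_append.mp hl
    rw [List.map_append, ← List.cons_append, isWeaklyRegular_append_iff, List.map_singleton,
      isWeaklyRegular_singleton_iff]
    refine ⟨ih hl, ?_⟩
    rw [isSMulRegular_quotient_iff_mem_of_smul_mem, smul_eq_mul, Ideal.mul_top]
    intro f hf
    rw [smul_eq_mul, mem_ofList_C_cons_X_iff] at hf
    rw [mem_ofList_C_cons_X_iff]
    intro m hm
    have := hf (Finsupp.single i 1 + m) fun j hj => by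
      have : j ≠ i := hi j hj i (by simp)
      simp [this.symm, hm j hj]
    rwa [X, coeff_add_monomial_mul, one_mul] at this

theorem ofList_C_cons_X_eq_comap {l : List σ} (hl : ∀ i, i ∈ l) :
    Ideal.ofList (C a :: l.map X) = (Ideal.span {a}).comap (constantCoeff (σ := σ)) := by
  ext f
  rw [mem_ofList_C_cons_X_iff, Ideal.mem_comap, Ideal.mem_span_singleton,
    ← coeff_zero_eq_constantCoeff_apply]
  refine ⟨fun h => h 0 (by simp), fun h m hm => ?_⟩
  rwa [show m = 0 from Finsupp.ext fun i => hm i (hl i)]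

theorem isMaximal_ofList_C_cons_X (ha : (Ideal.span {a}).IsMaximal) {l : List σ}
    (hl : ∀ i, i ∈ l) : (Ideal.ofList (C a :: l.map X) : Ideal (MvPowerSeries σ R)).IsMaximal := by
  rw [ofList_C_cons_X_eq_comap hl]
  exact Ideal.comap_isMaximal_of_surjective _ fun c => ⟨C c, constantCoeff_C c⟩

end PowerSeries

section MoravaSequence

open MvPowerSeries RingTheory.Sequence

theorem span_image_Iio_eq_ofList {R : Type*} [CommRing R] (u : ℕ → R) (t : ℕ) :
    Ideal.span (u '' Set.Iio t) = Ideal.ofList ((List.range t).map u) := by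
  rw [Ideal.ofList]
  congr 1
  ext; simp

theorem exists_range_eq_append_cons {n t : ℕ} (ht : t < n) :
    ∃ l, List.range n = List.range t ++ t :: l := by
  obtain ⟨m, rfl⟩ := Nat.exists_eq_add_of_lt ht
  rw [Nat.add_assoc, List.range_add, List.range_succ_eq_map, List.map_cons, add_zero]
  exact ⟨_, rfl⟩

namespace MoravaGen

variable (p : ℕ) [Fact p.Prime] (k : Type*)

theorem map_range_eq [CommRing k] {n : ℕ} (hn : 1 ≤ n) :
    (List.range n).map (MoravaGen p k n) =
      C (p : WittVector p k) :: (List.finRange (n - 1)).map X := by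
  obtain ⟨n, rfl⟩ := Nat.exists_eq_add_of_le' hn
  refine List.ext_getElem (by simp) fun i hi _ => ?_
  have hi : i < n + 1 := by simpa using hi
  rcases i with - | i
  · simp [MoravaGen]
  · simp [MoravaGen, Nat.lt_of_succ_lt_succ hi]

variable [Field k] [CharP k p] {n : ℕ} (hn : 1 ≤ n)
include hn

theorem isWeaklyRegular :
    IsWeaklyRegular (MvPowerSeries (Fin (n - 1)) (WittVector p k))
      ((List.range n).map (MoravaGen p k n)) := by
  rw [map_range_eq p k hn]
  exact isWeaklyRegular_C_cons_X
    (IsSMulRegular.of_ne_zero (WittVector.irreducible p).ne_zero) (List.nodup_finRange _)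

theorem isMaximal_ofList [PerfectRing k p] :
    (Ideal.ofList ((List.range n).map (MoravaGen p k n))).IsMaximal := by
  rw [map_range_eq p k hn]
  exact isMaximal_ofList_C_cons_X
    (PrincipalIdealRing.isMaximal_of_irreducible (WittVector.irreducible p)) List.mem_finRange

end MoravaGen

end MoravaSequence

/-- The ring `L_t = π₀ L_{K(t)} E_n`, i.e. the `I_t`-adic completion of `E[u_t⁻¹]` where
`E = 𝕎(k)⟦u_1, …, u_{n-1}⟧` and `I_t = (u_0, …, u_{t-1})` with `u_0 = p`, is a Noetherian
integrally closed integral domain. -/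
theorem Lt_is_noetherian_normal_domain (p : ℕ) [Fact p.Prime] (k : Type*) [Field k]
    [CharP k p] [PerfectField k] (n : ℕ) (hn : 1 ≤ n) (t : ℕ) (ht : t < n) :
    IsNoetherianRing
      (AdicCompletion
        (Ideal.map
          (algebraMap (MvPowerSeries (Fin (n - 1)) (WittVector p k))
            (Localization.Away (MoravaGen p k n t)))
          (Ideal.span (MoravaGen p k n '' Set.Iio t)))
        (Localization.Away (MoravaGen p k n t))) ∧
    IsDomain
      (AdicCompletion
        (Ideal.map
          (algebraMap (MvPowerSeries (Fin (n - 1)) (WittVector p k))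
            (Localization.Away (MoravaGen p k n t)))
          (Ideal.span (MoravaGen p k n '' Set.Iio t)))
        (Localization.Away (MoravaGen p k n t))) ∧
    IsIntegrallyClosed
      (AdicCompletion
        (Ideal.map
          (algebraMap (MvPowerSeries (Fin (n - 1)) (WittVector p k))
            (Localization.Away (MoravaGen p k n t)))
          (Ideal.span (MoravaGen p k n '' Set.Iio t)))
        (Localization.Away (MoravaGen p k n t))) := by
  have : ExpChar k p := .prime Fact.out
  let u := MoravaGen p k n
  obtain ⟨l, hl⟩ := exists_range_eq_append_cons ht
  have hu : (List.range n).map u = (List.range t).map u ++ u t :: l.map u := by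
    rw [hl, List.map_append, List.map_cons]
  have hreg := MoravaGen.isWeaklyRegular p k hn
  have hmax := MoravaGen.isMaximal_ofList p k hn
  rw [hu] at hreg hmax
  have hrad : Ideal.ofList ((List.range t).map u ++ u t :: l.map u) ≤ Ideal.jacobson ⊥ := by
    rw [IsLocalRing.eq_maximalIdeal hmax]
    exact IsLocalRing.maximalIdeal_le_jacobson ⊥
  have : IsNormalDomain (_ ⧸ Ideal.ofList ((List.range t).map u ++ u t :: l.map u)) :=
    .of_isField ((Ideal.Quotient.maximal_ideal_iff_isField_quotient _).mp hmax)
  have : IsNoetherianRing (Localization.Away (u t)) :=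
    IsLocalization.isNoetherianRing (.powers (u t)) _ inferInstance
  rw [span_image_Iio_eq_ofList]
  have hnormal :=
    IsNormalDomain.adicCompletion_localizationAway (Localization.Away (u t)) _ _ _ hreg hrad
  exact ⟨isNoetherianRing_adicCompletion _, hnormal.isDomain, hnormal.isIntegrallyClosed⟩
end

section
/- Let p be a prime, k a perfect field of characteristic p, n ≥ 1, and R = 𝕎(k)⟦u_1, …, u_{n−1}⟧, with the convention u_0 = p, and for 0 ≤ t < n let I_t = (u_0, u_1, …, u_{t−1}) ⊂ R. If M is a flat R-module, then the I_t-adic completion of the localized module M[u_t^{−1}] = M ⊗_R R[u_t^{−1}] is a flat R-module. -/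
/-!
Over a Noetherian ring `R`, the Artin–Rees property of a submodule of a finite module survives
tensoring with a flat module `N`, because `N ⊗ -` commutes with finite intersections and with
multiplication by powers of `I`. Hence `A ↦ (N ⊗ A)^` is exact on finite modules, although `N`
itself need not be finite. Comparing finite presentations identifies this functor with
`A ↦ N^ ⊗ A`, so tensoring with `N^` preserves the injectivity of the inclusion of an ideal. The
theorem is the case of the Noetherian ring `𝕎(k)⟦u_1, …, u_{n-1}⟧` and of `N = M[u_t⁻¹]`, a flat
module.
-/

section AdicFlat

open TensorProduct

variable {R : Type*} [CommRing R]

section SubmoduleTensor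

variable {M N P : Type*} [AddCommGroup M] [Module R M] [AddCommGroup N] [Module R N]
  [AddCommGroup P] [Module R P]

theorem smul_map₂_right (J : Ideal R) (f : M →ₗ[R] N →ₗ[R] P) (p : Submodule R M)
    (q : Submodule R N) : J • Submodule.map₂ f p q = Submodule.map₂ f p (J • q) := by
  apply le_antisymm
  · refine Submodule.smul_le.2 fun r hr x hx => ?_
    have hle : Submodule.map₂ f p q ≤ (Submodule.map₂ f p (J • q)).comap (LinearMap.lsmul R P r) :=
      Submodule.map₂_le.2 fun m hm n hn => by
        simpa only [Submodule.mem_comap, LinearMap.lsmul_apply, map_smul] using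
          Submodule.apply_mem_map₂ f hm (Submodule.smul_mem_smul hr hn)
    exact hle hx
  · refine Submodule.map₂_le.2 fun m hm n hn => ?_
    have hle : J • q ≤ (J • Submodule.map₂ f p q).comap (f m) :=
      Submodule.smul_le.2 fun r hr n hn => by
        simpa only [Submodule.mem_comap, map_smul] using
          Submodule.smul_mem_smul hr (Submodule.apply_mem_map₂ f hm hn)
    exact hle hn

variable (N) in
theorem range_lTensor_eq_map₂ (f : M →ₗ[R] P) :
    LinearMap.range (f.lTensor N) = Submodule.map₂ (mk R N P) ⊤ (LinearMap.range f) := by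
  rw [LinearMap.lTensor, range_map, LinearMap.range_id]

theorem map₂_mk_top_inf_le [Module.Flat R N] (p q : Submodule R P) :
    Submodule.map₂ (mk R N P) ⊤ p ⊓ Submodule.map₂ (mk R N P) ⊤ q ≤
      Submodule.map₂ (mk R N P) ⊤ (p ⊓ q) := by
  have range_subtype (s : Submodule R P) :
      Submodule.map₂ (mk R N P) ⊤ s = LinearMap.range (s.subtype.lTensor N) := by
    rw [range_lTensor_eq_map₂, Submodule.range_subtype]
  have hexact : Function.Exact (Submodule.inclusion (inf_le_left : p ⊓ q ≤ p))
      (q.mkQ ∘ₗ p.subtype) := by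
    rw [LinearMap.exact_iff, LinearMap.ker_comp, Submodule.ker_mkQ, Submodule.range_inclusion]
    ext
    simp
  simp only [range_subtype]
  rintro _ ⟨⟨y, rfl⟩, ⟨z, hz⟩⟩
  have hy : (q.mkQ ∘ₗ p.subtype).lTensor N y = 0 := by
    rw [LinearMap.lTensor_comp_apply, ← hz, ← LinearMap.lTensor_comp_apply,
      LinearMap.exact_subtype_mkQ q |>.linearMap_comp_eq_zero, LinearMap.lTensor_zero,
      LinearMap.zero_apply]
  obtain ⟨w, rfl⟩ := (Module.Flat.lTensor_exact N hexact y).1 hy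
  exact ⟨w, by rw [← LinearMap.lTensor_comp_apply, Submodule.subtype_comp_inclusion]⟩

end SubmoduleTensor

section Completion

variable (I : Ideal R)

/-- The conclusion of the Artin–Rees lemma for a submodule `P` of `B`: up to a shift by a constant,
the filtration of `P` by the `I ^ n • B ⊓ P` is the `I`-adic one. -/
def IsArtinRees {B : Type*} [AddCommGroup B] [Module R B] (P : Submodule R B) : Prop :=
  ∃ c : ℕ, ∀ n : ℕ, I ^ (n + c) • ⊤ ⊓ P ≤ I ^ n • P

variable {A B C : Type*} [AddCommGroup A] [Module R A] [AddCommGroup B] [Module R B]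
  [AddCommGroup C] [Module R C] (N : Type*) [AddCommGroup N] [Module R N] {I}

theorem mkQ_eq_val_of_le {x : AdicCompletion I B} {b : B} {m n : ℕ} (hmn : m ≤ n)
    (hb : (I ^ n • ⊤ : Submodule R B).mkQ b = x.val n) :
    (I ^ m • ⊤ : Submodule R B).mkQ b = x.val m := by
  rw [← x.2 hmn]
  exact congrArg (AdicCompletion.transitionMap I B hmn) hb

namespace IsArtinRees

theorem of_finite [IsNoetherianRing R] [Module.Finite R B] (P : Submodule R B) :
    IsArtinRees I P := by
  obtain ⟨c, hc⟩ := Ideal.exists_pow_inf_eq_pow_smul I P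
  refine ⟨c, fun n => ?_⟩
  rw [hc (n + c) (Nat.le_add_left c n), Nat.add_sub_cancel]
  exact smul_mono_right _ inf_le_right

protected theorem bot : IsArtinRees I (⊥ : Submodule R B) :=
  ⟨0, fun _ => inf_le_right.trans bot_le⟩

theorem map₂_mk_top [Module.Flat R N] {P : Submodule R B} (hP : IsArtinRees I P) :
    IsArtinRees I (Submodule.map₂ (mk R N B) ⊤ P) := by
  obtain ⟨c, hc⟩ := hP
  refine ⟨c, fun n => ?_⟩
  calc I ^ (n + c) • ⊤ ⊓ Submodule.map₂ (mk R N B) ⊤ P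
      = Submodule.map₂ (mk R N B) ⊤ (I ^ (n + c) • ⊤) ⊓ Submodule.map₂ (mk R N B) ⊤ P := by
        rw [← smul_map₂_right, map₂_mk_top_top_eq_top]
    _ ≤ Submodule.map₂ (mk R N B) ⊤ (I ^ (n + c) • ⊤ ⊓ P) := map₂_mk_top_inf_le _ _
    _ ≤ Submodule.map₂ (mk R N B) ⊤ (I ^ n • P) := Submodule.map₂_le_map₂_right (hc n)
    _ = I ^ n • Submodule.map₂ (mk R N B) ⊤ P := (smul_map₂_right _ _ _ _).symm

theorem range_lTensor [IsNoetherianRing R] [Module.Finite R B] [Module.Flat R N]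
    (f : A →ₗ[R] B) : IsArtinRees I (LinearMap.range (f.lTensor N)) := by
  rw [range_lTensor_eq_map₂]
  exact (of_finite _).map₂_mk_top N

theorem mem_range_map_subtype {P : Submodule R B} (hP : IsArtinRees I P)
    {x : AdicCompletion I B} (hx : ∀ n, x.val n ∈ P.map (Submodule.mkQ (I ^ n • ⊤))) :
    ∃ z, AdicCompletion.map I P.subtype z = x := by
  obtain ⟨c, hc⟩ := hP
  choose y hyP hy using hx
  let z (n : ℕ) : P := ⟨y (n + c), hyP _⟩
  have hcompat {m n : ℕ} (hmn : m ≤ n) : (I ^ m • ⊤ : Submodule R B).mkQ (y n) = x.val m :=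
    mkQ_eq_val_of_le hmn (hy n)
  have hcauchy (n : ℕ) : z n ≡ z (n + 1) [SMOD (I ^ n • ⊤ : Submodule R P)] := by
    rw [SModEq.sub_mem, Submodule.mem_smul_top_iff]
    refine hc n ⟨?_, (z n - z (n + 1)).2⟩
    exact (Submodule.Quotient.eq _).1 ((hy _).trans (hcompat (by lia)).symm)
  refine ⟨AdicCompletion.mk I P (AdicCompletion.AdicCauchySequence.mk I P z hcauchy), ?_⟩
  exact AdicCompletion.ext fun n => hcompat (Nat.le_add_right n c)

theorem val_mem_map_ker {g : B →ₗ[R] C} (hg : IsArtinRees I (LinearMap.range g))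
    {x : AdicCompletion I B} (hx : AdicCompletion.map I g x = 0) (n : ℕ) :
    x.val n ∈ (LinearMap.ker g).map (Submodule.mkQ (I ^ n • ⊤)) := by
  obtain ⟨c, hc⟩ := hg
  obtain ⟨b, hb⟩ := Submodule.mkQ_surjective _ (x.val (n + c))
  have hgb : g b ∈ (I ^ (n + c) • ⊤ : Submodule R C) := by
    rw [← Submodule.Quotient.mk_eq_zero]
    simpa [← hb] using congrArg (fun y => y.val (n + c)) hx
  have hgb' : g b ∈ (I ^ n • ⊤ : Submodule R B).map g := by
    rw [Submodule.map_smul'', Submodule.map_top]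
    exact hc n ⟨hgb, b, rfl⟩
  obtain ⟨d, hd, hgd⟩ := hgb'
  refine ⟨b - d, LinearMap.sub_mem_ker_iff.2 hgd.symm, ?_⟩
  have hbn : (I ^ n • ⊤ : Submodule R B).mkQ b = x.val n :=
    mkQ_eq_val_of_le (Nat.le_add_right n c) hb
  rw [map_sub, hbn, Submodule.mkQ_apply, (Submodule.Quotient.mk_eq_zero _).2 hd, sub_zero]

theorem map_exact {f : A →ₗ[R] B} {g : B →ₗ[R] C} (hfg : Function.Exact f g)
    (hf : IsArtinRees I (LinearMap.range f)) (hg : IsArtinRees I (LinearMap.range g)) :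
    Function.Exact (AdicCompletion.map I f) (AdicCompletion.map I g) := by
  refine LinearMap.exact_of_comp_eq_zero_of_ker_le_range ?_ fun x hx => ?_
  · rw [AdicCompletion.map_comp, hfg.linearMap_comp_eq_zero, AdicCompletion.map_zero]
  · have hx' := hg.val_mem_map_ker hx
    rw [hfg.linearMap_ker_eq] at hx'
    obtain ⟨z, rfl⟩ := hf.mem_range_map_subtype hx'
    obtain ⟨y, rfl⟩ := AdicCompletion.map_surjective I f.surjective_rangeRestrict z
    exact ⟨y, by rw [AdicCompletion.map_comp_apply, f.subtype_comp_codRestrict]⟩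

theorem map_injective {g : B →ₗ[R] C} (hg : IsArtinRees I (LinearMap.range g))
    (hinj : Function.Injective g) : Function.Injective (AdicCompletion.map I g) := by
  have hexact : Function.Exact (0 : B →ₗ[R] B) g := (LinearMap.exact_zero_iff_injective B g).2 hinj
  have hzero : IsArtinRees I (LinearMap.range (0 : B →ₗ[R] B)) := by
    rw [LinearMap.range_zero]
    exact .bot
  refine (injective_iff_map_eq_zero _).2 fun x hx => ?_
  obtain ⟨y, rfl⟩ := (map_exact hexact hzero hg x).1 hx
  rw [AdicCompletion.map_zero, LinearMap.zero_apply]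

end IsArtinRees

theorem adicCompletion_map_add_apply (f g : A →ₗ[R] B) (x : AdicCompletion I A) :
    AdicCompletion.map I (f + g) x = AdicCompletion.map I f x + AdicCompletion.map I g x := by
  induction x using AdicCompletion.induction_on
  rfl

theorem adicCompletion_map_smul_apply (r : R) (f : A →ₗ[R] B) (x : AdicCompletion I A) :
    AdicCompletion.map I (r • f) x = r • AdicCompletion.map I f x := by
  induction x using AdicCompletion.induction_on
  rfl

variable (I A) in
/-- The natural comparison map `N^ ⊗ A → (N ⊗ A)^` for the `I`-adic completion, sending `x ⊗ a` to
the image of `x` under the completion of `N → N ⊗ A`, `y ↦ y ⊗ a`. -/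
noncomputable def adicTensorComparison :
    AdicCompletion I N ⊗[R] A →ₗ[R] AdicCompletion I (N ⊗[R] A) :=
  lift <| LinearMap.mk₂ R (fun x a => AdicCompletion.map I ((mk R N A).flip a) x)
    (fun _ _ _ => map_add _ _ _)
    (fun r x _ => LinearMap.map_smul_of_tower _ r x)
    (fun x a b => by rw [map_add, adicCompletion_map_add_apply])
    (fun r x a => by rw [map_smul, adicCompletion_map_smul_apply])

namespace adicTensorComparison

variable {N}

@[simp]
theorem apply_tmul (x : AdicCompletion I N) (a : A) :
    adicTensorComparison I A N (x ⊗ₜ a) = AdicCompletion.map I ((mk R N A).flip a) x :=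
  rfl

theorem map_lTensor_comp (f : A →ₗ[R] B) :
    (AdicCompletion.map I (f.lTensor N)).restrictScalars R ∘ₗ adicTensorComparison I A N =
      adicTensorComparison I B N ∘ₗ f.lTensor (AdicCompletion I N) := by
  refine TensorProduct.ext' fun x a => ?_
  simp only [LinearMap.comp_apply, LinearMap.coe_restrictScalars, apply_tmul,
    LinearMap.lTensor_tmul, AdicCompletion.map_comp_apply]
  rfl

theorem bijective_pi (ι : Type*) [Finite ι] :
    Function.Bijective (adicTensorComparison I (ι → R) N) := by
  classical
  have := Fintype.ofFinite ι
  let e : AdicCompletion I (N ⊗[R] (ι → R)) ≃ₗ[R] (ι → AdicCompletion I N) :=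
    (AdicCompletion.congr I (piScalarRight R R N ι) ≪≫ₗ
      AdicCompletion.piEquivOfFintype I fun _ => N).restrictScalars R
  have he : e.toLinearMap ∘ₗ adicTensorComparison I (ι → R) N =
      (piScalarRight R R (AdicCompletion I N) ι).toLinearMap := by
    refine TensorProduct.ext' fun x a => funext fun i => ?_
    have hlin : LinearMap.proj i ∘ₗ (piScalarRight R R N ι).toLinearMap ∘ₗ
        (mk R N (ι → R)).flip a = a i • LinearMap.id := by
      ext
      simp
    calc e (adicTensorComparison I (ι → R) N (x ⊗ₜ a)) i
        = AdicCompletion.map I (LinearMap.proj i ∘ₗ (piScalarRight R R N ι).toLinearMap ∘ₗ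
            (mk R N (ι → R)).flip a) x := by
          simp [e, AdicCompletion.pi, AdicCompletion.map_comp_apply]
      _ = a i • x := by
          rw [hlin, adicCompletion_map_smul_apply, AdicCompletion.map_id, LinearMap.id_apply]
      _ = piScalarRight R R (AdicCompletion I N) ι (x ⊗ₜ a) i := by simp
  have hcomp : Function.Bijective (e ∘ adicTensorComparison I (ι → R) N) := by
    rw [← LinearEquiv.coe_coe, ← LinearMap.coe_comp, he]
    exact LinearEquiv.bijective _
  exact e.bijective.of_comp_iff' _ |>.1 hcomp

theorem bijective_of_finite [IsNoetherianRing R] [Module.Flat R N] [Module.Finite R A] :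
    Function.Bijective (adicTensorComparison I A N) := by
  have := Module.finitePresentation_of_finite R A
  obtain ⟨l, m, g, f, hg, hfg⟩ := Module.FinitePresentation.exists_fin' R A
  have hexact : Function.Exact (AdicCompletion.map I (f.lTensor N))
      (AdicCompletion.map I (g.lTensor N)) :=
    IsArtinRees.map_exact (lTensor_exact N hfg hg) (.range_lTensor N f) (.range_lTensor N g)
  have hsurj : Function.Surjective (AdicCompletion.map I (g.lTensor N)) :=
    AdicCompletion.map_surjective I (LinearMap.lTensor_surjective N hg)
  exact LinearMap.bijective_of_surjective_of_bijective_of_right_exact _ _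
    ((AdicCompletion.map I (f.lTensor N)).restrictScalars R)
    ((AdicCompletion.map I (g.lTensor N)).restrictScalars R) _ _ _
    (map_lTensor_comp f) (map_lTensor_comp g) (lTensor_exact _ hfg hg) hexact
    (bijective_pi _).2 (bijective_pi _) (LinearMap.lTensor_surjective _ hg) hsurj

end adicTensorComparison

variable (I)

theorem flat_adicCompletion [IsNoetherianRing R] [Module.Flat R N] :
    Module.Flat R (AdicCompletion I N) := by
  refine Module.Flat.iff_lTensor_injective'.2 fun J => ?_
  have hmap : Function.Injective (AdicCompletion.map I (J.subtype.lTensor N)) :=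
    (IsArtinRees.range_lTensor N J.subtype).map_injective
      (Module.Flat.lTensor_preserves_injective_linearMap _ J.injective_subtype)
  have hcomp := hmap.comp (adicTensorComparison.bijective_of_finite (I := I) (N := N) (A := J)).1
  rw [← LinearMap.coe_restrictScalars R, ← LinearMap.coe_comp,
    adicTensorComparison.map_lTensor_comp, LinearMap.coe_comp] at hcomp
  exact hcomp.of_comp

theorem adicCompletion_localization_flat_general [IsNoetherianRing R] (S : Submonoid R)
    (L : Type*) [CommRing L] [Algebra R L] [IsLocalization S L]
    (M : Type*) [AddCommGroup M] [Module R M] [Module.Flat R M] :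
    Module.Flat R (AdicCompletion I (M ⊗[R] L)) := by
  have : Module.Flat R L := IsLocalization.flat L S
  exact flat_adicCompletion I (M ⊗[R] L)

end Completion

end AdicFlat

open TensorProduct in
/-- If `M` is a flat module over `R = 𝕎(k)⟦u_1, …, u_{n-1}⟧` and `0 ≤ t < n`, then the
`I_t`-adic completion of `M[u_t⁻¹] = M ⊗_R R[u_t⁻¹]` is a flat `R`-module, where
`I_t = (u_0, …, u_{t-1})` with `u_0 = p`. -/
theorem adicCompletion_localization_flat (p : ℕ) [Fact p.Prime] (k : Type*) [Field k]
    [CharP k p] [PerfectField k] (n : ℕ) (hn : 1 ≤ n) (t : ℕ) (ht : t < n)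
    (M : Type*) [AddCommGroup M] [Module (MvPowerSeries (Fin (n - 1)) (WittVector p k)) M]
    [Module.Flat (MvPowerSeries (Fin (n - 1)) (WittVector p k)) M] :
    Module.Flat (MvPowerSeries (Fin (n - 1)) (WittVector p k))
      (AdicCompletion (Ideal.span (MoravaGen p k n '' Set.Iio t))
        (M ⊗[MvPowerSeries (Fin (n - 1)) (WittVector p k)]
          Localization.Away (MoravaGen p k n t))) :=
  adicCompletion_localization_flat_general _ (.powers (MoravaGen p k n t)) _ M
end
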